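/- Let P be a range-restricted CHR program. If the ω! state ⟨𝔾; ∅; 𝔹; 𝕍⟩ derives in finitely many ω! transition steps to ⟨𝕃; ℙ; 𝔹'; 𝕍⟩, then for every natural number N there exists an ωe state ⟨𝔾'; 𝔹'; 𝕍⟩ such that ⟨𝔾; 𝔹; 𝕍⟩ derives in finitely many ωe transition steps to ⟨𝔾'; 𝔹'; 𝕍⟩ and the multiset 𝕃 ⊎ N·ℙ (the linear store together with N copies of every persistent constraint) is a sub-multiset of 𝔾'. (Soundness of ω! with respect to ωe.) -/

import Mathlib

set_option autoImplicit false

/-! ## Syntax: variables, terms, constraints -/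

/-- Variables -/
abbrev Var := ℕ

/-- First-order terms -/
inductive Term : Type
  | var : Var → Term
  | app : String → List Term → Term

mutual
  /-- Application of a substitution to a term -/
  def Term.subst (ρ : Var → Term) : Term → Term
    | .var x => ρ x
    | .app f ts => .app f (Term.substList ρ ts)
  /-- Application of a substitution to a list of terms -/
  def Term.substList (ρ : Var → Term) : List Term → List Term
    | [] => []
    | t :: ts => Term.subst ρ t :: Term.substList ρ ts
end

mutual
  /-- Variables occurring in a term -/
  def Term.varList : Term → List Var
    | .var x => [x]
    | .app _ ts => Term.varLists ts
  /-- Variables occurring in a list of terms -/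
  def Term.varLists : List Term → List Var
    | [] => []
    | t :: ts => Term.varList t ++ Term.varLists ts
end

/-- User-defined (CHR) constraints -/
structure UserC where
  name : String
  args : List Term

def UserC.subst (ρ : Var → Term) (c : UserC) : UserC := ⟨c.name, Term.substList ρ c.args⟩
def UserC.varList (c : UserC) : List Var := Term.varLists c.args

/-- Built-in constraints: syntactic equality `≐`, theory-interpreted predicates, and falsum `⊥`.
    The empty conjunction plays the role of `⊤`. -/
inductive BAtom : Type
  | eq : Term → Term → BAtom
  | pred : String → List Term → BAtom
  | bfalse : BAtom

def BAtom.subst (ρ : Var → Term) : BAtom → BAtom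
  | .eq s t => .eq (s.subst ρ) (t.subst ρ)
  | .pred p ts => .pred p (Term.substList ρ ts)
  | .bfalse => .bfalse

def BAtom.varList : BAtom → List Var
  | .eq s t => s.varList ++ t.varList
  | .pred _ ts => Term.varLists ts
  | .bfalse => []

/-- A user-defined constraint store: a multiset of CHR constraints -/
abbrev UStore := Multiset UserC
/-- A built-in constraint store: a conjunction (multiset) of built-in atoms -/
abbrev BStore := Multiset BAtom

def UStore.vars (G : UStore) : Set Var := {x | ∃ c ∈ G, x ∈ c.varList}
def BStore.vars (B : BStore) : Set Var := {x | ∃ a ∈ B, x ∈ a.varList}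
def UStore.subst (ρ : Var → Term) (G : UStore) : UStore := G.map (UserC.subst ρ)

/-- The single substitution [X/t] -/
def single (X : Var) (t : Term) : Var → Term := fun y => if y = X then t else .var y

/-- The falsum built-in store `⊥` -/
def botStore : BStore := {BAtom.bfalse}

/-! ## The constraint theory CT -/

/-- A constraint theory: an interpretation of the built-in predicate symbols over the
    term model; `≐` is interpreted as syntactic equality and `⊥` as falsity. -/
structure CTheory where
  interp : String → List Term → Prop

/-- Satisfaction of a built-in atom under a valuation `ρ` -/
def CTheory.satAtom (I : CTheory) (ρ : Var → Term) : BAtom → Prop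
  | .eq s t => s.subst ρ = t.subst ρ
  | .pred p ts => I.interp p (Term.substList ρ ts)
  | .bfalse => False

/-- Satisfaction of a conjunction of built-in atoms -/
def CTheory.sat (I : CTheory) (ρ : Var → Term) (B : BStore) : Prop := ∀ a ∈ B, I.satAtom ρ a

/-- `CT ⊨ ∃ S. B ↔ ∃ S'. B'` : the stores `B`, `B'` are equivalent up to
    existential quantification of the variable sets `S`, `S'` respectively. -/
def CTheory.equivUpTo (I : CTheory) (S S' : Set Var) (B B' : BStore) : Prop :=
  ∀ ρ : Var → Term,
    (∃ ρ', (∀ x ∉ S, ρ' x = ρ x) ∧ I.sat ρ' B) ↔ (∃ ρ', (∀ x ∉ S', ρ' x = ρ x) ∧ I.sat ρ' B')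

/-! ## CHR rules and programs -/

/-- A CHR rule `r @ kept \ removed ⇔ guard | bodyC, bodyB`.
    A propagation rule is one with `removed = []`. -/
structure Rule where
  kept : List UserC
  removed : List UserC
  guard : List BAtom
  bodyC : List UserC
  bodyB : List BAtom

def ucsVarList (l : List UserC) : List Var := (l.map UserC.varList).flatten
def basVarList (l : List BAtom) : List Var := (l.map BAtom.varList).flatten

/-- All variables of a rule -/
def Rule.vars (r : Rule) : Set Var :=
  {x | x ∈ ucsVarList (r.kept ++ r.removed ++ r.bodyC) ++ basVarList (r.guard ++ r.bodyB)}

/-- The local variables of a rule: those of guard and body not occurring in the heads -/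
def Rule.localVars (r : Rule) : Set Var :=
  {x | x ∈ basVarList r.guard ++ ucsVarList r.bodyC ++ basVarList r.bodyB} \
    {x | x ∈ ucsVarList (r.kept ++ r.removed)}

/-- A rule is range-restricted iff it has no local variables -/
def Rule.RangeRestricted (r : Rule) : Prop := r.localVars = ∅

def Rule.map (θ : Var → Term) (r : Rule) : Rule :=
  ⟨r.kept.map (UserC.subst θ), r.removed.map (UserC.subst θ), r.guard.map (BAtom.subst θ),
   r.bodyC.map (UserC.subst θ), r.bodyB.map (BAtom.subst θ)⟩

/-- `r'` is a variant of `r`: it is obtained from `r` by renaming its variables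
    with pairwise distinct variables -/
def Rule.IsVariantOf (r' r : Rule) : Prop :=
  ∃ ρ : Var → Var, Set.InjOn ρ r.vars ∧ r' = r.map (fun x => Term.var (ρ x))

/-- A CHR program is a set of rules -/
abbrev Program := Set Rule
def Program.RangeRestricted (P : Program) : Prop := ∀ r ∈ P, r.RangeRestricted

/-! ## The equivalence-based operational semantics ωe -/

/-- An ωe state `⟨𝔾; 𝔹; 𝕍⟩` -/
structure StateE where
  uds : UStore
  bis : BStore
  glob : Set Var

/-- ωe state equivalence `≡e`: the smallest equivalence relation satisfying
    (1) equality as substitution, (2) CT-equivalent transformation of the built-in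
    store up to strictly local variables, (3) omission of non-occurring global
    variables, (4) equivalence of failed states. -/
inductive EquivE (I : CTheory) : StateE → StateE → Prop
  | refl (σ : StateE) : EquivE I σ σ
  | symm {σ τ : StateE} : EquivE I σ τ → EquivE I τ σ
  | trans {σ τ υ : StateE} : EquivE I σ τ → EquivE I τ υ → EquivE I σ υ
  | substEq (G : UStore) (B : BStore) (V : Set Var) (X : Var) (t : Term) :
      EquivE I ⟨G, BAtom.eq (.var X) t ::ₘ B, V⟩
               ⟨UStore.subst (single X t) G, BAtom.eq (.var X) t ::ₘ B, V⟩
  | builtin (G : UStore) (B B' : BStore) (V : Set Var) :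
      I.equivUpTo (BStore.vars B \ (V ∪ UStore.vars G))
                  (BStore.vars B' \ (V ∪ UStore.vars G)) B B' →
      EquivE I ⟨G, B, V⟩ ⟨G, B', V⟩
  | globalDrop (G : UStore) (B : BStore) (V : Set Var) (X : Var) :
      X ∉ UStore.vars G → X ∉ BStore.vars B →
      EquivE I ⟨G, B, insert X V⟩ ⟨G, B, V⟩
  | failed (G G' : UStore) (V : Set Var) : EquivE I ⟨G, botStore, V⟩ ⟨G', botStore, V⟩

/-- The ωe transition relation `↦e` (on `≡e`-equivalence classes, represented by
    states linked via `≡e` on both ends): application of a variant of a program rule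
    whose local variables are fresh for the pre-transition state. -/
inductive StepE (I : CTheory) (P : Program) : StateE → StateE → Prop
  | mk (σ τ : StateE) (r r' : Rule) (rest : UStore) (B : BStore) (V : Set Var) :
      r ∈ P → r'.IsVariantOf r →
      Disjoint r'.localVars (UStore.vars rest ∪ BStore.vars B ∪ V) →
      EquivE I σ ⟨↑r'.kept + ↑r'.removed + rest, ↑r'.guard + B, V⟩ →
      EquivE I ⟨↑r'.kept + ↑r'.bodyC + rest, ↑r'.guard + ↑r'.bodyB + B, V⟩ τ →
      StepE I P σ τ

/-! ## The operational semantics ω! with persistent constraints -/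

/-- An ω! state `⟨𝕃; ℙ; 𝔹; 𝕍⟩` with linear store `𝕃` and persistent store `ℙ` -/
structure StateB where
  lin : UStore
  per : UStore
  bis : BStore
  glob : Set Var

/-- ω! state equivalence `≡!`: the analogues of the `≡e` conditions (substitution
    acting on both stores, all failed states equivalent) together with contraction
    of the persistent store. -/
inductive EquivB (I : CTheory) : StateB → StateB → Prop
  | refl (σ : StateB) : EquivB I σ σ
  | symm {σ τ : StateB} : EquivB I σ τ → EquivB I τ σ
  | trans {σ τ υ : StateB} : EquivB I σ τ → EquivB I τ υ → EquivB I σ υ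
  | substEq (L P : UStore) (B : BStore) (V : Set Var) (X : Var) (t : Term) :
      EquivB I ⟨L, P, BAtom.eq (.var X) t ::ₘ B, V⟩
               ⟨UStore.subst (single X t) L, UStore.subst (single X t) P,
                BAtom.eq (.var X) t ::ₘ B, V⟩
  | builtin (L P : UStore) (B B' : BStore) (V : Set Var) :
      I.equivUpTo (BStore.vars B \ (V ∪ UStore.vars L ∪ UStore.vars P))
                  (BStore.vars B' \ (V ∪ UStore.vars L ∪ UStore.vars P)) B B' →
      EquivB I ⟨L, P, B, V⟩ ⟨L, P, B', V⟩
  | globalDrop (L P : UStore) (B : BStore) (V : Set Var) (X : Var) :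
      X ∉ UStore.vars L → X ∉ UStore.vars P → X ∉ BStore.vars B →
      EquivB I ⟨L, P, B, insert X V⟩ ⟨L, P, B, V⟩
  | failed (L P L' P' : UStore) (V V' : Set Var) :
      EquivB I ⟨L, P, botStore, V⟩ ⟨L', P', botStore, V'⟩
  | contract (L Q P : UStore) (B : BStore) (V : Set Var) :
      EquivB I ⟨L, Q + Q + P, B, V⟩ ⟨L, Q + P, B, V⟩

/-- The ω! transition relation `↦!` (on `≡!`-classes): **ApplyLinear** and
    **ApplyPersistent**, each subject to the irreflexivity condition `[σ] ≠ [τ]`. -/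
inductive StepB (I : CTheory) (P : Program) : StateB → StateB → Prop
  | applyLinear (σ τ : StateB) (r r' : Rule) (H1l H1p H2l H2p rest perRest : UStore)
      (B : BStore) (V : Set Var) :
      r ∈ P → r'.IsVariantOf r →
      (↑r'.kept : UStore) = H1l + H1p → (↑r'.removed : UStore) = H2l + H2p → H2l ≠ 0 →
      Disjoint r'.localVars
        (UStore.vars rest ∪ UStore.vars perRest ∪ BStore.vars B ∪ V) →
      EquivB I σ ⟨H1l + H2l + rest, H1p + H2p + perRest, ↑r'.guard + B, V⟩ →
      EquivB I ⟨H1l + ↑r'.bodyC + rest, H1p + H2p + perRest,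
                ↑r'.guard + B + ↑r'.bodyB, V⟩ τ →
      ¬ EquivB I σ τ →
      StepB I P σ τ
  | applyPersistent (σ τ : StateB) (r r' : Rule) (H1l H1p rest perRest : UStore)
      (B : BStore) (V : Set Var) :
      r ∈ P → r'.IsVariantOf r →
      (↑r'.kept : UStore) = H1l + H1p →
      Disjoint r'.localVars
        (UStore.vars rest ∪ UStore.vars perRest ∪ BStore.vars B ∪ V) →
      EquivB I σ ⟨H1l + rest, H1p + ↑r'.removed + perRest, ↑r'.guard + B, V⟩ →
      EquivB I ⟨H1l + rest, H1p + ↑r'.removed + ↑r'.bodyC + perRest,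
                ↑r'.guard + B + ↑r'.bodyB, V⟩ τ →
      ¬ EquivB I σ τ →
      StepB I P σ τ

/-! ## Proof -/

namespace CHRSound

def Unsat (I : CTheory) (B : BStore) : Prop := ∀ ρ, ¬ I.sat ρ B

theorem unsat_bot (I : CTheory) : Unsat I botStore := by
  intro ρ h
  exact h BAtom.bfalse (by simp [botStore])

theorem unsat_add (I : CTheory) {B C : BStore} (h : Unsat I B) : Unsat I (B + C) := by
  intro ρ hs
  exact h ρ (fun a ha => hs a (Multiset.mem_add.2 (Or.inl ha)))

theorem equivUpTo_unsat (I : CTheory) {S S' : Set Var} {B B' : BStore} (h : Unsat I B)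
    (h' : Unsat I B') : I.equivUpTo S S' B B' := by
  intro ρ
  constructor
  · rintro ⟨ρ', _, hs⟩
    exact (h ρ' hs).elim
  · rintro ⟨ρ', _, hs⟩
    exact (h' ρ' hs).elim

theorem equivUpTo_symm (I : CTheory) {S S' : Set Var} {B B' : BStore}
    (h : I.equivUpTo S S' B B') : I.equivUpTo S' S B' B := fun ρ => (h ρ).symm

theorem unsat_of_equivUpTo (I : CTheory) {S S' : Set Var} {B B' : BStore}
    (h : I.equivUpTo S S' B B') (hu : Unsat I B) : Unsat I B' := by
  intro ρ hs
  obtain ⟨ρ', _, hs'⟩ := (h ρ).2 ⟨ρ, fun _ _ => rfl, hs⟩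
  exact hu ρ' hs'

theorem equivB_unsat (I : CTheory) {σ τ : StateB} (h : EquivB I σ τ) :
    Unsat I σ.bis ↔ Unsat I τ.bis := by
  induction h with
  | refl => exact Iff.rfl
  | symm _ ih => exact ih.symm
  | trans _ _ ih1 ih2 => exact ih1.trans ih2
  | substEq => exact Iff.rfl
  | builtin L P B B' V h =>
    exact ⟨unsat_of_equivUpTo I h, unsat_of_equivUpTo I (equivUpTo_symm I h)⟩
  | globalDrop => exact Iff.rfl
  | failed => exact Iff.rfl
  | contract => exact Iff.rfl

theorem equivB_of_unsat (I : CTheory) {σ τ : StateB} (h : Unsat I σ.bis) (h' : Unsat I τ.bis) :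
    EquivB I σ τ := by
  obtain ⟨L, P, B, V⟩ := σ
  obtain ⟨L', P', B', V'⟩ := τ
  refine .trans (.builtin L P B botStore V (equivUpTo_unsat I h (unsat_bot I))) ?_
  refine .trans (.failed L P L' P' V V') ?_
  exact .builtin _ _ _ _ _ (equivUpTo_unsat I (unsat_bot I) h')

theorem equivE_of_unsat (I : CTheory) {G G' : UStore} {B B' : BStore} {V : Set Var}
    (h : Unsat I B) (h' : Unsat I B') : EquivE I ⟨G, B, V⟩ ⟨G', B', V⟩ := by
  refine .trans (.builtin G B botStore V (equivUpTo_unsat I h (unsat_bot I))) ?_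
  refine .trans (.failed G G' V) ?_
  exact .builtin _ _ _ _ (equivUpTo_unsat I (unsat_bot I) h')

/-- Global variable sets related through failed states -/
def FD (I : CTheory) (V V' : Set Var) : Prop := EquivE I ⟨0, botStore, V⟩ ⟨0, botStore, V'⟩

/-- `Q` consists of at least `N` copies of `P`, and only of constraints in `P` -/
def Good (N : ℕ) (P Q : UStore) : Prop := N • P ≤ Q ∧ ∀ c ∈ Q, c ∈ P

def emb (σ : StateB) (Q : UStore) : StateE := ⟨σ.lin + Q, σ.bis, σ.glob⟩

def Sim (I : CTheory) (σ τ : StateB) : Prop :=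
  ∀ N, ∃ M, ∀ Q, Good (M + 1) σ.per Q → ∃ Q', Good (N + 1) τ.per Q' ∧
    EquivE I (emb σ Q) (emb τ Q')

theorem Sim.trans {I : CTheory} {σ τ υ : StateB} (h : Sim I σ τ) (h' : Sim I τ υ) :
    Sim I σ υ := by
  intro N
  obtain ⟨M, hM⟩ := h' N
  obtain ⟨K, hK⟩ := h M
  refine ⟨K, fun Q hQ => ?_⟩
  obtain ⟨Q1, hQ1, e1⟩ := hK Q hQ
  obtain ⟨Q2, hQ2, e2⟩ := hM Q1 hQ1
  exact ⟨Q2, hQ2, e1.trans e2⟩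

theorem Good.mem_iff {N : ℕ} {P Q : UStore} (h : Good (N + 1) P Q) (c : UserC) :
    c ∈ Q ↔ c ∈ P := by
  refine ⟨h.2 c, fun hc => Multiset.mem_of_le h.1 ?_⟩
  rw [succ_nsmul]
  exact Multiset.mem_add.2 (Or.inr hc)

theorem vars_add (G H : UStore) : UStore.vars (G + H) = UStore.vars G ∪ UStore.vars H := by
  ext x
  simp only [UStore.vars, Multiset.mem_add, Set.mem_ofPred_eq, Set.mem_union]
  constructor
  · rintro ⟨c, hc | hc, hx⟩
    · exact Or.inl ⟨c, hc, hx⟩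
    · exact Or.inr ⟨c, hc, hx⟩
  · rintro (⟨c, hc, hx⟩ | ⟨c, hc, hx⟩)
    · exact ⟨c, Or.inl hc, hx⟩
    · exact ⟨c, Or.inr hc, hx⟩

theorem Good.vars_eq {N : ℕ} {P Q : UStore} (h : Good (N + 1) P Q) :
    UStore.vars Q = UStore.vars P := by
  ext x
  simp only [UStore.vars, Set.mem_ofPred_eq, h.mem_iff]

theorem exists_preimage (f : UserC → UserC) (P R : UStore) (h : ∀ c ∈ R, c ∈ P.map f) :
    ∃ S : UStore, (∀ c ∈ S, c ∈ P) ∧ S.map f = R := by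
  induction R using Multiset.induction with
  | empty => exact ⟨0, by simp, by simp⟩
  | cons a R ih =>
    obtain ⟨S, hS, e⟩ := ih (fun c hc => h c (Multiset.mem_cons_of_mem hc))
    obtain ⟨b, hb, rfl⟩ := Multiset.mem_map.1 (h a (Multiset.mem_cons_self a R))
    refine ⟨b ::ₘ S, ?_, by simp [e]⟩
    intro c hc
    rcases Multiset.mem_cons.1 hc with rfl | hc
    · exact hb
    · exact hS c hc

theorem sim_builtin (I : CTheory) (L P : UStore) (B B' : BStore) (V : Set Var)
    (h : I.equivUpTo (BStore.vars B \ (V ∪ UStore.vars L ∪ UStore.vars P))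
      (BStore.vars B' \ (V ∪ UStore.vars L ∪ UStore.vars P)) B B') :
    Sim I ⟨L, P, B, V⟩ ⟨L, P, B', V⟩ := by
  intro N
  refine ⟨N, fun Q hQ => ⟨Q, hQ, ?_⟩⟩
  refine .builtin _ _ _ _ ?_
  rw [vars_add, hQ.vars_eq, ← Set.union_assoc]
  exact h

theorem sim_equivB (I : CTheory) {σ τ : StateB} (h : EquivB I σ τ) :
    Unsat I σ.bis ∨ (Sim I σ τ ∧ Sim I τ σ ∧ FD I σ.glob τ.glob) := by
  induction h with
  | refl σ =>
    exact Or.inr ⟨fun N => ⟨N, fun Q hQ => ⟨Q, hQ, .refl _⟩⟩,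
      fun N => ⟨N, fun Q hQ => ⟨Q, hQ, .refl _⟩⟩, .refl _⟩
  | symm h ih =>
    rcases ih with hu | ⟨h1, h2, h3⟩
    · exact Or.inl ((equivB_unsat I h).1 hu)
    · exact Or.inr ⟨h2, h1, h3.symm⟩
  | trans h h' ih1 ih2 =>
    rcases ih1 with hu | ⟨h1, h2, h3⟩
    · exact Or.inl hu
    rcases ih2 with hu | ⟨h1', h2', h3'⟩
    · exact Or.inl ((equivB_unsat I h).2 hu)
    · exact Or.inr ⟨h1.trans h1', h2'.trans h2, EquivE.trans h3 h3'⟩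
  | substEq L P B V X t =>
    refine Or.inr ⟨fun N => ⟨N, fun Q hQ => ⟨UStore.subst (single X t) Q, ⟨?_, ?_⟩, ?_⟩⟩,
      fun N => ⟨N, fun Q hQ => ?_⟩, .refl _⟩
    · have := Multiset.map_le_map (f := UserC.subst (single X t)) hQ.1
      rw [Multiset.map_nsmul] at this
      exact this
    · intro c hc
      obtain ⟨b, hb, rfl⟩ := Multiset.mem_map.1 hc
      exact Multiset.mem_map_of_mem _ (hQ.2 b hb)
    · have := EquivE.substEq (I := I) (L + Q) B V X t
      simpa only [emb, UStore.subst, Multiset.map_add] using this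
    · obtain ⟨h1, h2⟩ := hQ
      obtain ⟨R, rfl⟩ := Multiset.le_iff_exists_add.1 h1
      obtain ⟨S, hS, e⟩ := exists_preimage (UserC.subst (single X t)) P R
        (fun c hc => h2 c (Multiset.mem_add.2 (Or.inr hc)))
      refine ⟨(N + 1) • P + S, ⟨Multiset.le_add_right _ _, ?_⟩, .symm ?_⟩
      · intro c hc
        rcases Multiset.mem_add.1 hc with hc | hc
        · exact Multiset.mem_of_mem_nsmul hc
        · exact hS c hc
      · have := EquivE.substEq (I := I) (L + ((N + 1) • P + S)) B V X t
        simpa only [emb, UStore.subst, Multiset.map_add, Multiset.map_nsmul, e] using this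
  | builtin L P B B' V h =>
    exact Or.inr ⟨sim_builtin I L P B B' V h, sim_builtin I L P B' B V (equivUpTo_symm I h),
      .refl _⟩
  | globalDrop L P B V X h1 h2 h3 =>
    have key : ∀ N Q, Good (N + 1) P Q →
        EquivE I ⟨L + Q, B, insert X V⟩ ⟨L + Q, B, V⟩ := by
      intro N Q hQ
      refine .globalDrop _ _ _ _ ?_ h3
      rw [vars_add, hQ.vars_eq]
      rintro (h | h)
      · exact h1 h
      · exact h2 h
    refine Or.inr ⟨fun N => ⟨N, fun Q hQ => ⟨Q, hQ, key N Q hQ⟩⟩,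
      fun N => ⟨N, fun Q hQ => ⟨Q, hQ, (key N Q hQ).symm⟩⟩, .globalDrop _ _ _ _ ?_ ?_⟩
    · simp [UStore.vars]
    · simp [BStore.vars, botStore, BAtom.varList]
  | failed => exact Or.inl (unsat_bot I)
  | contract L Q0 P B V =>
    refine Or.inr ⟨fun N => ⟨N, fun Q hQ => ⟨Q, ⟨le_trans ?_ hQ.1, ?_⟩, .refl _⟩⟩,
      fun N => ⟨2 * N + 1, fun Q hQ => ⟨Q, ⟨le_trans ?_ hQ.1, ?_⟩, .refl _⟩⟩, .refl _⟩
    · refine Multiset.le_iff_exists_add.2 ⟨(N + 1) • Q0, ?_⟩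
      module
    · intro c hc
      have := hQ.2 c hc
      simp only [Multiset.mem_add] at this ⊢
      tauto
    · refine Multiset.le_iff_exists_add.2 ⟨(N + 1) • P, ?_⟩
      module
    · intro c hc
      have := hQ.2 c hc
      simp only [Multiset.mem_add] at this ⊢
      tauto

open Relation

theorem stepE_left {I : CTheory} {P : Program} {a b c : StateE} (h : EquivE I a b)
    (h' : StepE I P b c) : StepE I P a c := by
  cases h' with
  | mk r r' rest B V h1 h2 h3 h4 h5 =>
  exact .mk _ _ r r' rest B V h1 h2 h3 (h.trans h4) h5

theorem stepE_right {I : CTheory} {P : Program} {a b c : StateE}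
    (h' : StepE I P a b) (h : EquivE I b c) : StepE I P a c := by
  cases h' with
  | mk r r' rest B V h1 h2 h3 h4 h5 =>
  exact .mk _ _ r r' rest B V h1 h2 h3 h4 (h5.trans h)

theorem trans_left {I : CTheory} {P : Program} {a b c : StateE} (h : EquivE I a b)
    (h' : TransGen (StepE I P) b c) : TransGen (StepE I P) a c := by
  obtain ⟨d, h1, h2⟩ := TransGen.head'_iff.1 h'
  exact TransGen.head'_iff.2 ⟨d, stepE_left h h1, h2⟩

theorem trans_right {I : CTheory} {P : Program} {a b c : StateE}
    (h' : TransGen (StepE I P) a b) (h : EquivE I b c) : TransGen (StepE I P) a c := by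
  obtain ⟨d, h1, h2⟩ := TransGen.tail'_iff.1 h'
  exact TransGen.tail'_iff.2 ⟨d, h1, stepE_right h2 h⟩

mutual
  theorem varList_ren (ρ : Var → Var) : ∀ t : Term,
      (t.subst (fun x => Term.var (ρ x))).varList = t.varList.map ρ
    | .var x => by simp [Term.subst, Term.varList]
    | .app f ts => by
      simp only [Term.subst, Term.varList]
      exact varLists_ren ρ ts
  theorem varLists_ren (ρ : Var → Var) : ∀ ts : List Term,
      Term.varLists (Term.substList (fun x => Term.var (ρ x)) ts) = (Term.varLists ts).map ρ
    | [] => by simp [Term.substList, Term.varLists]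
    | t :: ts => by
      simp only [Term.substList, Term.varLists, List.map_append]
      rw [varList_ren ρ t, varLists_ren ρ ts]
end

theorem ucs_ren (ρ : Var → Var) (l : List UserC) :
    ucsVarList (l.map (UserC.subst (fun x => Term.var (ρ x)))) = (ucsVarList l).map ρ := by
  induction l with
  | nil => rfl
  | cons a l ih =>
    simp only [ucsVarList, List.map_cons, List.flatten_cons, List.map_append] at ih ⊢
    rw [ih]
    simp [UserC.varList, UserC.subst, varLists_ren]

theorem ba_ren (ρ : Var → Var) (a : BAtom) :
    (a.subst (fun x => Term.var (ρ x))).varList = a.varList.map ρ := by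
  cases a <;> simp [BAtom.subst, BAtom.varList, varLists_ren, varList_ren]

theorem bas_ren (ρ : Var → Var) (l : List BAtom) :
    basVarList (l.map (BAtom.subst (fun x => Term.var (ρ x)))) = (basVarList l).map ρ := by
  induction l with
  | nil => rfl
  | cons a l ih =>
    simp only [basVarList, List.map_cons, List.flatten_cons, List.map_append] at ih ⊢
    rw [ih, ba_ren]

theorem variant_rr {r r' : Rule} (h : r.RangeRestricted) (hv : r'.IsVariantOf r) :
    r'.localVars = ∅ := by
  obtain ⟨ρ, -, rfl⟩ := hv
  unfold Rule.RangeRestricted Rule.localVars at h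
  unfold Rule.localVars
  rw [Set.sdiff_eq_empty] at h ⊢
  simp only [Rule.map]
  rw [← List.map_append, ucs_ren, ucs_ren, bas_ren, bas_ren, ← List.map_append,
    ← List.map_append]
  intro x hx
  obtain ⟨y, hy, rfl⟩ := List.mem_map.1 hx
  exact List.mem_map_of_mem (h hy)

theorem one_step {I : CTheory} {P : Program} (hP : P.RangeRestricted) {r r' : Rule}
    (hr : r ∈ P) (hv : r'.IsVariantOf r) (rest : UStore) (B : BStore) (V : Set Var) :
    StepE I P ⟨↑r'.kept + ↑r'.removed + rest, ↑r'.guard + B, V⟩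
      ⟨↑r'.kept + ↑r'.bodyC + rest, ↑r'.guard + ↑r'.bodyB + B, V⟩ := by
  refine .mk _ _ r r' rest B V hr hv ?_ (.refl _) (.refl _)
  rw [variant_rr (hP r hr) hv]
  exact Set.empty_disjoint _

theorem equivE_mem (I : CTheory) (G : UStore) {B B' : BStore} (V : Set Var)
    (h : ∀ a, a ∈ B ↔ a ∈ B') : EquivE I ⟨G, B, V⟩ ⟨G, B', V⟩ := by
  refine .builtin _ _ _ _ ?_
  have e : BStore.vars B = BStore.vars B' := by
    ext x
    simp only [BStore.vars, h]
  intro ρ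
  simp only [CTheory.sat, h, e]

theorem iter_step {I : CTheory} {P : Program} (hP : P.RangeRestricted) {r r' : Rule}
    (hr : r ∈ P) (hv : r'.IsVariantOf r) (V : Set Var) (k : ℕ) :
    ∀ (rest : UStore) (B : BStore), TransGen (StepE I P)
      ⟨↑r'.kept + (k + 1) • (↑r'.removed : UStore) + rest, ↑r'.guard + B, V⟩
      ⟨↑r'.kept + (k + 1) • (↑r'.bodyC : UStore) + rest, ↑r'.guard + ↑r'.bodyB + B, V⟩ := by
  induction k with
  | zero =>
    intro rest B
    have := one_step (I := I) hP hr hv rest B V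
    simpa using TransGen.single this
  | succ k ih =>
    intro rest B
    have h1 := one_step (I := I) hP hr hv (rest + (k + 1) • (↑r'.removed : UStore)) B V
    have h2 := ih (rest + ↑r'.bodyC) (↑r'.bodyB + B)
    have e1 : (↑r'.kept + ↑r'.removed + (rest + (k + 1) • (↑r'.removed : UStore)) : UStore)
        = ↑r'.kept + (k + 1 + 1) • (↑r'.removed : UStore) + rest := by module
    have e2 : (↑r'.kept + ↑r'.bodyC + (rest + (k + 1) • (↑r'.removed : UStore)) : UStore)
        = ↑r'.kept + (k + 1) • (↑r'.removed : UStore) + (rest + ↑r'.bodyC) := by module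
    have e3 : (↑r'.kept + (k + 1) • (↑r'.bodyC : UStore) + (rest + ↑r'.bodyC) : UStore)
        = ↑r'.kept + (k + 1 + 1) • (↑r'.bodyC : UStore) + rest := by module
    have e4 : (↑r'.guard + ↑r'.bodyB + B : BStore) = ↑r'.guard + (↑r'.bodyB + B) := by
      rw [add_assoc]
    rw [e1, e2, e4] at h1
    rw [e3] at h2
    refine trans_right (TransGen.head h1 h2) (equivE_mem I _ V ?_)
    intro a
    simp only [Multiset.mem_add]
    tauto

/-- Simulation of one transition, stated on the representatives -/
def Fwd (I : CTheory) (P : Program) (σ τ : StateB) : Prop :=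
  ∀ N, ∃ M, ∀ Q, Good (M + 1) σ.per Q → ∃ Q', Good (N + 1) τ.per Q' ∧
    TransGen (StepE I P) (emb σ Q) (emb τ Q')

theorem core_linear {I : CTheory} {P : Program} (hP : P.RangeRestricted) {r r' : Rule}
    (hr : r ∈ P) (hv : r'.IsVariantOf r) (H1l H1p H2l H2p rest perRest : UStore)
    (B : BStore) (V : Set Var)
    (h1 : (↑r'.kept : UStore) = H1l + H1p) (h2 : (↑r'.removed : UStore) = H2l + H2p) :
    Fwd I P ⟨H1l + H2l + rest, H1p + H2p + perRest, ↑r'.guard + B, V⟩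
      ⟨H1l + ↑r'.bodyC + rest, H1p + H2p + perRest, ↑r'.guard + B + ↑r'.bodyB, V⟩ := by
  intro N
  refine ⟨N + 1, fun Q hQ => ?_⟩
  obtain ⟨hle, hmem⟩ := hQ
  obtain ⟨R, rfl⟩ := Multiset.le_iff_exists_add.1 hle
  refine ⟨H1p + perRest + (N + 1) • (H1p + H2p + perRest) + R, ⟨?_, ?_⟩, ?_⟩
  · refine Multiset.le_iff_exists_add.2 ⟨H1p + perRest + R, ?_⟩
    simp only
    module
  · intro c hc
    have := hmem c
    simp only [Multiset.mem_add, succ_nsmul] at this hc ⊢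
    by_cases hR : c ∈ R
    · exact this (Or.inr hR)
    · have h3 : c ∈ N • (H1p + H2p + perRest) → c ∈ H1p + H2p + perRest :=
        Multiset.mem_of_mem_nsmul
      simp only [Multiset.mem_add] at h3
      tauto
  · have h := one_step (I := I) hP hr hv
      (rest + perRest + (N + 1) • (H1p + H2p + perRest) + R) B V
    refine TransGen.single ?_
    have e1 : (↑r'.kept + ↑r'.removed
        + (rest + perRest + (N + 1) • (H1p + H2p + perRest) + R) : UStore)
        = H1l + H2l + rest + ((N + 1 + 1) • (H1p + H2p + perRest) + R) := by
      rw [h1, h2]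
      module
    have e2 : (↑r'.kept + ↑r'.bodyC
        + (rest + perRest + (N + 1) • (H1p + H2p + perRest) + R) : UStore)
        = H1l + ↑r'.bodyC + rest
          + (H1p + perRest + (N + 1) • (H1p + H2p + perRest) + R) := by
      rw [h1]
      module
    rw [e1, e2, add_right_comm (↑r'.guard : BStore)] at h
    exact h

theorem core_persistent {I : CTheory} {P : Program} (hP : P.RangeRestricted) {r r' : Rule}
    (hr : r ∈ P) (hv : r'.IsVariantOf r) (H1l H1p rest perRest : UStore)
    (B : BStore) (V : Set Var) (h1 : (↑r'.kept : UStore) = H1l + H1p) :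
    Fwd I P ⟨H1l + rest, H1p + ↑r'.removed + perRest, ↑r'.guard + B, V⟩
      ⟨H1l + rest, H1p + ↑r'.removed + ↑r'.bodyC + perRest,
        ↑r'.guard + B + ↑r'.bodyB, V⟩ := by
  intro N
  refine ⟨2 * N + 1, fun Q hQ => ?_⟩
  obtain ⟨hle, hmem⟩ := hQ
  obtain ⟨R, rfl⟩ := Multiset.le_iff_exists_add.1 hle
  generalize hrem : (↑r'.removed : UStore) = rem at *
  generalize hbod : (↑r'.bodyC : UStore) = bod at *
  refine ⟨(N + 1) • (H1p + rem + perRest) + (N + 1) • (H1p + perRest) + (N + 1) • bod + R,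
    ⟨?_, ?_⟩, ?_⟩
  · refine Multiset.le_iff_exists_add.2 ⟨(N + 1) • (H1p + perRest) + R, ?_⟩
    simp only
    module
  · intro c hc
    have := hmem c
    have h3 : ∀ S : UStore, c ∈ (N + 1) • S → c ∈ S := fun S => Multiset.mem_of_mem_nsmul
    have h4 := h3 (H1p + rem + perRest)
    have h5 := h3 (H1p + perRest)
    have h6 := h3 bod
    simp only [Multiset.mem_add] at hc h4 h5 ⊢
    rcases hc with ((hc | hc) | hc) | hc
    · rcases h4 hc with (h | h) | h <;> simp [h]
    · rcases h5 hc with h | h <;> simp [h]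
    · simp [h6 hc]
    · have h7 := this (Multiset.mem_add.2 (Or.inr hc))
      simp only [Multiset.mem_add] at h7
      rcases h7 with (h | h) | h <;> simp [h]
  · have h := iter_step (I := I) hP hr hv V N
      (rest + N • H1p + (N + 1) • perRest + (N + 1) • (H1p + rem + perRest) + R) B
    rw [hrem, hbod] at h
    have e1 : (↑r'.kept + (N + 1) • rem
        + (rest + N • H1p + (N + 1) • perRest + (N + 1) • (H1p + rem + perRest) + R) : UStore)
        = H1l + rest + ((2 * N + 1 + 1) • (H1p + rem + perRest) + R) := by
      rw [h1]
      module
    have e2 : (↑r'.kept + (N + 1) • bod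
        + (rest + N • H1p + (N + 1) • perRest + (N + 1) • (H1p + rem + perRest) + R) : UStore)
        = H1l + rest + ((N + 1) • (H1p + rem + perRest) + (N + 1) • (H1p + perRest)
          + (N + 1) • bod + R) := by
      rw [h1]
      module
    rw [e1, e2, add_right_comm (↑r'.guard : BStore)] at h
    exact h

theorem stepB_decomp {I : CTheory} {P : Program} (hP : P.RangeRestricted) {σ τ : StateB}
    (h : StepB I P σ τ) : ¬ Unsat I σ.bis ∧ ∃ π π' : StateB,
      EquivB I σ π ∧ EquivB I π' τ ∧ π.glob = π'.glob ∧ Fwd I P π π' := by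
  have aux : ∀ π π' : StateB, EquivB I σ π → EquivB I π' τ → ¬ EquivB I σ τ →
      (Unsat I π.bis → Unsat I π'.bis) → ¬ Unsat I σ.bis := by
    intro π π' h1 h2 h3 h4 h5
    exact h3 (equivB_of_unsat I h5
      ((equivB_unsat I h2).1 (h4 ((equivB_unsat I h1).1 h5))))
  cases h with
  | applyLinear r r' H1l H1p H2l H2p rest perRest B V hr hv e1 e2 _ _ q1 q2 ne =>
    exact ⟨aux _ _ q1 q2 ne (unsat_add I), _, _, q1, q2, rfl,
      core_linear hP hr hv _ _ _ _ _ _ _ _ e1 e2⟩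
  | applyPersistent r r' H1l H1p rest perRest B V hr hv e1 _ q1 q2 ne =>
    exact ⟨aux _ _ q1 q2 ne (unsat_add I), _, _, q1, q2, rfl,
      core_persistent hP hr hv _ _ _ _ _ _ e1⟩

theorem main_inv (I : CTheory) (P : Program) (hP : P.RangeRestricted)
    (G : UStore) (B : BStore) (V : Set Var) (τ : StateB)
    (h : ReflTransGen (StepB I P) ⟨G, 0, B, V⟩ τ) :
    (FD I V τ.glob ∧ ∀ N, ∃ Q, Good (N + 1) τ.per Q ∧
      ReflTransGen (StepE I P) ⟨G, B, V⟩ (emb τ Q)) ∨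
    (Unsat I τ.bis ∧ ∀ G' B', Unsat I B' → TransGen (StepE I P) ⟨G, B, V⟩ ⟨G', B', V⟩) := by
  induction h with
  | refl =>
    refine Or.inl ⟨.refl _, fun N => ⟨0, ⟨by simp, by simp⟩, ?_⟩⟩
    simp only [emb, add_zero]
    exact .refl
  | @tail σ τ _ hs ih =>
    obtain ⟨hsat, π, π', q1, q2, hg, hf⟩ := stepB_decomp hP hs
    rcases ih with ⟨fd, hreach⟩ | ⟨hu, _⟩
    swap
    · exact (hsat hu).elim
    rcases sim_equivB I q1 with hu | ⟨s1, -, fd1⟩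
    · exact (hsat hu).elim
    have reach' : ∀ N, ∃ Q, Good (N + 1) π'.per Q ∧
        TransGen (StepE I P) ⟨G, B, V⟩ (emb π' Q) := by
      intro N
      obtain ⟨M, hM⟩ := hf N
      obtain ⟨K, hK⟩ := s1 M
      obtain ⟨Q, hQ, t⟩ := hreach K
      obtain ⟨Q1, hQ1, e1⟩ := hK Q hQ
      obtain ⟨Q2, hQ2, t2⟩ := hM Q1 hQ1
      exact ⟨Q2, hQ2, TransGen.trans_right t (trans_left e1 t2)⟩
    have fd' : FD I V π'.glob := by
      rw [← hg]
      exact EquivE.trans fd fd1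
    rcases sim_equivB I q2 with hu | ⟨s2, -, fd2⟩
    · refine Or.inr ⟨(equivB_unsat I q2).1 hu, fun G' B' hB' => ?_⟩
      obtain ⟨Q, -, t⟩ := reach' 0
      refine trans_right t ?_
      refine .trans (equivE_of_unsat I hu (unsat_bot I) (G' := 0)) ?_
      refine .trans (EquivE.symm fd') ?_
      exact equivE_of_unsat I (unsat_bot I) hB'
    · refine Or.inl ⟨EquivE.trans fd' fd2, fun N => ?_⟩
      obtain ⟨M, hM⟩ := s2 N
      obtain ⟨Q, hQ, t⟩ := reach' M
      obtain ⟨Q', hQ', e⟩ := hM Q hQ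
      exact ⟨Q', hQ', (trans_right t e).to_reflTransGen⟩

end CHRSound

/-! ## Statement 0: Soundness of ω! with respect to ωe -/

/-- **Soundness of ω! w.r.t. ωe.** If `⟨𝔾; ∅; 𝔹; 𝕍⟩ ↦!* ⟨𝕃; ℙ; 𝔹'; 𝕍⟩` for a
    range-restricted program `P`, then for every `N : ℕ` there is an ωe state
    `⟨𝔾'; 𝔹'; 𝕍⟩` with `⟨𝔾; 𝔹; 𝕍⟩ ↦e* ⟨𝔾'; 𝔹'; 𝕍⟩` and `𝕃 ⊎ N·ℙ ⊆ 𝔾'`. -/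
theorem soundness_of_omega_bang (I : CTheory) (P : Program) (hP : P.RangeRestricted)
    (G L Pm : UStore) (B B' : BStore) (V : Set Var)
    (h : Relation.ReflTransGen (StepB I P) ⟨G, 0, B, V⟩ ⟨L, Pm, B', V⟩) :
    ∀ N : ℕ, ∃ G' : UStore,
      Relation.ReflTransGen (StepE I P) ⟨G, B, V⟩ ⟨G', B', V⟩ ∧ L + N • Pm ≤ G' := by
  intro N
  rcases CHRSound.main_inv I P hP G B V _ h with ⟨-, hr⟩ | ⟨hu, hr⟩
  · obtain ⟨Q, hQ, t⟩ := hr N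
    refine ⟨L + Q, t, add_le_add_right ?_ L⟩
    refine le_trans ?_ hQ.1
    rw [succ_nsmul]
    exact Multiset.le_add_right _ _
  · exact ⟨L + N • Pm, (hr _ _ hu).to_reflTransGen, le_refl _⟩
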